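/- arXiv:1511.06738 — 3 statements merged into one kernel-verified Lean document; each statement's English description precedes it below -/
import Mathlib

section
/- For every n ≥ 1, the mod 2 Steinberg element e_n = Σ̄_n · B̄_n in the group algebra (ℤ/2)[GL_n(ℤ/2)] is idempotent: e_n * e_n = e_n. -/
open MonoidAlgebra
open scoped Classical

/-- The sum of all permutation matrices in the group algebra `(ℤ/2)[GL_n(ℤ/2)]`. -/
noncomputable def SigmaBar (n : ℕ) : MonoidAlgebra (ZMod 2) (GL (Fin n) (ZMod 2)) :=
  ∑ g : GL (Fin n) (ZMod 2),
    if ∃ σ : Equiv.Perm (Fin n),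
        (g : Matrix (Fin n) (Fin n) (ZMod 2)) = σ.permMatrix (ZMod 2)
    then MonoidAlgebra.single g 1 else 0

/-- The sum of all invertible upper-triangular matrices in `(ℤ/2)[GL_n(ℤ/2)]`. -/
noncomputable def BBar (n : ℕ) : MonoidAlgebra (ZMod 2) (GL (Fin n) (ZMod 2)) :=
  ∑ g : GL (Fin n) (ZMod 2),
    if Matrix.BlockTriangular (g : Matrix (Fin n) (Fin n) (ZMod 2)) id
    then MonoidAlgebra.single g 1 else 0

/-- The mod 2 Steinberg element `e_n = Σ̄_n ⬝ B̄_n`. -/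
noncomputable def SteinbergElement (n : ℕ) : MonoidAlgebra (ZMod 2) (GL (Fin n) (ZMod 2)) :=
  SigmaBar n * BBar n

/-!
Write `S` for the sum of the permutation matrices and `B` for the sum of the upper triangular ones.

If a permutation `w` is not the order-reversing one `w₀`, it preserves the order of some consecutive
pair `i ⋖ j`. The transvection `u = 1 + E_ij` is then carried by `w` to an upper triangular matrix,
so `B w u = B w`; since `B` is divisible by `1 + u` on the left, `B w B` is a multiple of
`B w (1 + u) = 2 B w = 0`. Hence `B S B = B w₀ B`, and it remains to see that `S B w₀ B = S B`.

More generally `S B w [N_w] = S B` for every `w`, where `[N_w]` is the sum of the pattern group on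
the inversions of `w`, which for `w₀` is `B`. Removing one inversion at a time reduces this to the
relation `S B s (1 + u) = S B` for a simple transposition `s = (i j)`. Here `B = (1 + u) H` with `H`
commuting with `s` and `u`, and by the braid relation `u s u = s u s` and `S s = S`, the cross terms
of `S (1 + u) s (1 + u)` cancel modulo 2.
-/

namespace Steinberg

section SubgroupSum

variable {k G : Type*} [Group G]

instance charP_monoidAlgebra [Semiring k] (p : ℕ) [CharP k p] : CharP (MonoidAlgebra k G) p :=
  charP_of_injective_ringHom (f := singleOneRingHom) single_right_injective p

theorem le_normalizer_of_relIndex_eq_two {K L : Subgroup G} (hKL : K ≤ L)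
    (h : K.relIndex L = 2) : L ≤ Subgroup.normalizer (K : Set G) :=
  (Subgroup.normal_subgroupOf_iff_le_normalizer hKL).1 (Subgroup.normal_of_index_eq_two h)

variable [Semiring k] [Fintype G]

variable (k) in
/-- The sum of the elements of a subgroup, as an element of the group algebra. -/
noncomputable def subgroupSum (H : Subgroup G) : MonoidAlgebra k G :=
  ∑ g with g ∈ H, of k G g

theorem subgroupSum_bot : subgroupSum k (⊥ : Subgroup G) = 1 := by
  have : ({g | g ∈ (⊥ : Subgroup G)} : Finset G) = {1} := by ext; simp [Subgroup.mem_bot]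
  rw [subgroupSum, this, Finset.sum_singleton, map_one]

theorem subgroupSum_mul_of {H : Subgroup G} {h : G} (hh : h ∈ H) :
    subgroupSum k H * of k G h = subgroupSum k H := by
  simp only [subgroupSum, Finset.sum_mul, ← map_mul]
  exact Finset.sum_equiv (Equiv.mulRight h) (by simp [H.mul_mem_cancel_right hh]) (by simp)

theorem commute_of_subgroupSum {H : Subgroup G} {g : G} (hg : g ∈ Subgroup.normalizer (H : Set G)) :
    Commute (of k G g) (subgroupSum k H) := by
  simp only [Commute, SemiconjBy, subgroupSum, Finset.mul_sum, Finset.sum_mul, ← map_mul]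
  exact Finset.sum_equiv (MulAut.conj g).toEquiv
    (by simpa using Subgroup.mem_normalizer_iff.1 hg) (by simp)

theorem subgroupSum_eq_one_add_of_mul {K L : Subgroup G} (hKL : K ≤ L) (h : K.relIndex L = 2)
    {u : G} (huL : u ∈ L) (huK : u ∉ K) :
    subgroupSum k L = (1 + of k G u) * subgroupSum k K := by
  have translate_mem_iff {x : G} (hx : x ∈ L) : u⁻¹ * x ∈ K ↔ x ∉ K := by
    have := Subgroup.mul_mem_iff_of_index_two h (a := ⟨u⁻¹, inv_mem huL⟩) (b := ⟨x, hx⟩)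
    simpa [Subgroup.mem_subgroupOf, huK] using this
  have mem_of_translate_mem {x : G} (hx : u⁻¹ * x ∈ K) : x ∈ L :=
    (L.mul_mem_cancel_left (inv_mem huL)).1 (hKL hx)
  have sum_translate : of k G u * subgroupSum k K = ∑ x with u⁻¹ * x ∈ K, of k G x := by
    simp only [subgroupSum, Finset.mul_sum, ← map_mul]
    exact Finset.sum_equiv (Equiv.mulLeft u) (by simp) (by simp)
  rw [add_mul, one_mul, sum_translate, subgroupSum, subgroupSum, ← Finset.sum_union]
  · congr 1
    ext x
    have := @hKL x
    have := @translate_mem_iff x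
    have := @mem_of_translate_mem x
    simp only [Finset.mem_union, Finset.mem_filter_univ]
    tauto
  · rw [Finset.disjoint_filter]
    exact fun x _ hx hux => (translate_mem_iff (hKL hx)).1 hux hx

end SubgroupSum

section Matrices

variable {ι R : Type*} [Fintype ι] [DecidableEq ι] [CommRing R]

variable (R) in
/-- Permutation matrices as invertible matrices. Mathlib's `permMatrixHom` sends `w` to the matrix
mapping the basis vector `e_a` to `e_(w a)`, which makes it multiplicative. -/
def permGL : Equiv.Perm ι →* GL ι R :=
  (Matrix.permMatrixHom (R := R)).toHomUnits

theorem permGL_mul_apply (w : Equiv.Perm ι) (x : GL ι R) (a b : ι) :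
    (permGL R w * x) a b = x (w⁻¹ a) b :=
  congr_fun₂ (PEquiv.toMatrix_toPEquiv_mul w⁻¹ x.val) a b

theorem mul_permGL_apply (x : GL ι R) (w : Equiv.Perm ι) (a b : ι) :
    (x * permGL R w) a b = x a (w b) :=
  congr_fun₂ (PEquiv.mul_toMatrix_toPEquiv x.val w⁻¹) a b

/-- The transvection `1 + c E_ij` as an invertible matrix: Mathlib has it as an element of the
special linear group. -/
def transvectionGL {i j : ι} (hij : i ≠ j) (c : R) : GL ι R :=
  Matrix.SpecialLinearGroup.toGL (Matrix.SpecialLinearGroup.transvection hij c)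

theorem transvectionGL_apply {i j : ι} (hij : i ≠ j) (c : R) (a b : ι) :
    transvectionGL hij c a b = (1 : Matrix ι ι R) a b + if a = i ∧ b = j then c else 0 := by
  change (1 + Matrix.single i j c : Matrix ι ι R) a b = _
  simp [Matrix.single_apply, eq_comm]

theorem transvectionGL_mul_apply {i j : ι} (hij : i ≠ j) (c : R) (x : GL ι R) (a b : ι) :
    (transvectionGL hij c * x) a b = x a b + if a = i then c * x j b else 0 := by
  change (Matrix.transvection i j c * x.val : Matrix ι ι R) a b = _
  split_ifs with ha
  · subst ha; simp
  · simp [ha]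

theorem permGL_mul_transvectionGL (w : Equiv.Perm ι) {i j : ι} (hij : i ≠ j) (c : R) :
    permGL R w * transvectionGL hij c =
      transvectionGL (w.injective.ne hij) c * permGL R w := by
  ext a b
  simp only [permGL_mul_apply, mul_permGL_apply, transvectionGL_apply, Matrix.one_apply,
    Equiv.Perm.inv_eq_iff_eq, w.injective.eq_iff]

theorem transvectionGL_mul_permGL_swap_mul_transvectionGL [CharP R 2] {i j : ι} (hij : i ≠ j) :
    transvectionGL hij (1 : R) * permGL R (Equiv.swap i j) * transvectionGL hij 1 =
      permGL R (Equiv.swap i j) * transvectionGL hij 1 * permGL R (Equiv.swap i j) := by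
  rw [mul_assoc, permGL_mul_transvectionGL, ← mul_assoc]
  congr 1
  ext a b
  simp only [mul_permGL_apply, transvectionGL_mul_apply, transvectionGL_apply, Matrix.one_apply,
    Equiv.swap_apply_left, Equiv.swap_apply_right, Equiv.swap_apply_def]
  grind

end Matrices

section PatternSubgroup

variable {ι R : Type*} [Fintype ι] [DecidableEq ι] [CommRing R]

theorem inv_apply_eq_one_apply {r : ι → ι → Prop} [IsStrictOrder ι r] {x : GL ι R}
    (hx : ∀ a b, ¬ r a b → x a b = (1 : Matrix ι ι R) a b) {a b : ι} (hab : ¬ r a b) :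
    x⁻¹ a b = (1 : Matrix ι ι R) a b := by
  induction a using (Finite.wellFounded_of_trans_of_irrefl (Function.swap r)).induction with
  | _ a ih =>
    have recursion : (x⁻¹).val = 1 - (x.val - 1) * (x⁻¹).val := by
      rw [sub_mul, Units.mul_inv]; simp
    rw [recursion, Matrix.sub_apply, Matrix.mul_apply, sub_eq_self]
    refine Finset.sum_eq_zero fun e _ => ?_
    by_cases hae : r a e
    · have heb : e ≠ b := by rintro rfl; exact hab hae
      rw [ih e hae fun h => hab (_root_.trans hae h), Matrix.one_apply_ne heb, mul_zero]
    · rw [Matrix.sub_apply, hx a e hae, sub_self, zero_mul]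

variable (R) in
/-- The pattern group of a strict order `r`: the invertible matrices that agree with the identity
matrix outside the positions `(a, b)` with `r a b`. -/
def patternSubgroup (r : ι → ι → Prop) [IsStrictOrder ι r] : Subgroup (GL ι R) where
  carrier := {x | ∀ a b, ¬ r a b → x a b = (1 : Matrix ι ι R) a b}
  one_mem' _ _ _ := rfl
  mul_mem' {x y} hx hy a b hab := by
    have expansion : x.val * y.val = x.val + y.val - 1 + (x.val - 1) * (y.val - 1) := by
      noncomm_ring
    have cross_term : ((x.val - 1) * (y.val - 1)) a b = 0 := by
      refine Finset.sum_eq_zero fun e _ => ?_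
      by_cases hae : r a e
      · have heb : ¬ r e b := fun h => hab (_root_.trans hae h)
        simp [hy e b heb]
      · simp [hx a e hae]
    rw [Units.val_mul, expansion, Matrix.add_apply, cross_term]
    simp [hx a b hab, hy a b hab]
  inv_mem' hx _ _ hab := inv_apply_eq_one_apply hx hab

variable {r s : ι → ι → Prop} [IsStrictOrder ι r] [IsStrictOrder ι s]

theorem mem_patternSubgroup {x : GL ι R} :
    x ∈ patternSubgroup R r ↔ ∀ a b, ¬ r a b → x a b = (1 : Matrix ι ι R) a b :=
  Iff.rfl

theorem patternSubgroup_mono (h : ∀ a b, r a b → s a b) :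
    patternSubgroup R r ≤ patternSubgroup R s :=
  fun _ hx a b hab => hx a b fun hr => hab (h a b hr)

theorem patternSubgroup_congr (h : ∀ a b, r a b ↔ s a b) :
    patternSubgroup R r = patternSubgroup R s :=
  le_antisymm (patternSubgroup_mono fun a b => (h a b).1)
    (patternSubgroup_mono fun a b => (h a b).2)

theorem patternSubgroup_eq_bot (h : ∀ a b, ¬ r a b) : patternSubgroup R r = ⊥ :=
  (Subgroup.eq_bot_iff_forall _).2 fun _ hx => Units.ext <| Matrix.ext fun a b => hx a b (h a b)

theorem transvectionGL_mem_patternSubgroup_iff {i j : ι} (hij : i ≠ j) (c : R) :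
    transvectionGL hij c ∈ patternSubgroup R r ↔ r i j ∨ c = 0 := by
  simp only [mem_patternSubgroup, transvectionGL_apply, add_eq_left, ite_eq_right_iff]
  grind

theorem permGL_mem_normalizer_patternSubgroup {w : Equiv.Perm ι}
    (h : ∀ a b, r (w a) (w b) ↔ r a b) :
    permGL R w ∈ Subgroup.normalizer (patternSubgroup R r : Set (GL ι R)) := by
  refine Subgroup.mem_normalizer_iff.2 fun x => ?_
  have conj_apply (a b : ι) :
      (permGL R w * x * (permGL R w)⁻¹) a b = x (w⁻¹ a) (w⁻¹ b) := by
    rw [← map_inv, mul_permGL_apply, permGL_mul_apply]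
  exact w.forall_congr fun a => w.forall_congr fun b => by
    rw [conj_apply, h]
    simp [Matrix.one_apply]

theorem mem_patternSubgroup_iff_of_insert {c d : ι} (hrs : ∀ a b, r a b ↔ s a b ∨ a = c ∧ b = d)
    (hs : ¬ s c d) {x : GL ι R} :
    x ∈ patternSubgroup R s ↔ x ∈ patternSubgroup R r ∧ x c d = 0 := by
  have hcd : c ≠ d := by rintro rfl; exact irrefl_of r c ((hrs c c).2 (.inr ⟨rfl, rfl⟩))
  simp only [mem_patternSubgroup, hrs, ← Matrix.one_apply_ne (α := R) hcd]
  grind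

theorem relIndex_patternSubgroup_of_insert {c d : ι}
    (hrs : ∀ a b, r a b ↔ s a b ∨ a = c ∧ b = d) (hs : ¬ s c d) :
    (patternSubgroup (ZMod 2) s).relIndex (patternSubgroup (ZMod 2) r) = 2 := by
  have hr : r c d := (hrs c d).2 (.inr ⟨rfl, rfl⟩)
  have hcd : c ≠ d := ne_of_irrefl hr
  have hT : transvectionGL hcd (1 : ZMod 2) ∈ patternSubgroup (ZMod 2) r :=
    (transvectionGL_mem_patternSubgroup_iff hcd 1).2 (.inl hr)
  refine Subgroup.relIndex_eq_two_iff_exists_notMem_and'.2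
    ⟨_, hT, by simp [transvectionGL_mem_patternSubgroup_iff, hs], fun x hx => ?_⟩
  have hdd : x d d = 1 := by simpa using hx d d (irrefl_of r d)
  simp only [mem_patternSubgroup_iff_of_insert hrs hs, hx, mul_mem hT hx, true_and,
    transvectionGL_mul_apply, hdd]
  generalize x c d = t
  revert t
  decide

end PatternSubgroup

section Inversions

variable {ι : Type*} [LinearOrder ι]

theorem swap_lt_swap_iff {i j : ι} (hij : i ⋖ j) {a b : ι} :
    Equiv.swap i j a < Equiv.swap i j b ↔ a < b ∧ ¬ (a = i ∧ b = j) ∨ a = j ∧ b = i := by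
  have hlt := hij.lt
  have ha : ¬ (i < a ∧ a < j) := fun h => hij.2 h.1 h.2
  have hb : ¬ (i < b ∧ b < j) := fun h => hij.2 h.1 h.2
  simp only [Equiv.swap_apply_def]
  grind

/-- The inversions of a permutation `w`: the pairs `a < b` whose order `w` reverses. This relation
is itself a strict order, so it has a pattern group, which is `U ∩ w⁻¹ U⁻ w` for `U` the upper and
`U⁻` the lower unitriangular matrices. -/
def Inversion (w : Equiv.Perm ι) (a b : ι) : Prop := a < b ∧ w b < w a

/-- The noninversions of a permutation `w`: the pairs `a < b` whose order `w` preserves. The pattern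
group of this strict order is `U ∩ w⁻¹ U w` for `U` the upper unitriangular matrices. -/
def Noninversion (w : Equiv.Perm ι) (a b : ι) : Prop := a < b ∧ w a < w b

instance isStrictOrder_inversion (w : Equiv.Perm ι) : IsStrictOrder ι (Inversion w) where
  irrefl a h := lt_irrefl a h.1
  trans _ _ _ h h' := ⟨h.1.trans h'.1, h'.2.trans h.2⟩

instance isStrictOrder_noninversion (w : Equiv.Perm ι) : IsStrictOrder ι (Noninversion w) where
  irrefl a h := lt_irrefl a h.1
  trans _ _ _ h h' := ⟨h.1.trans h'.1, h.2.trans h'.2⟩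

theorem not_inversion_one (a b : ι) : ¬ Inversion 1 a b := fun h => h.1.asymm h.2

theorem inversion_iff_lt_of_strictAnti {w : Equiv.Perm ι} (hw : StrictAnti w) (a b : ι) :
    Inversion w a b ↔ a < b :=
  and_iff_left_of_imp fun h => hw h

theorem not_noninversion_swap {i j : ι} (hij : i < j) : ¬ Noninversion (Equiv.swap i j) i j := by
  simp [Noninversion, hij.le]

theorem lt_iff_noninversion_swap_or {i j : ι} (hij : i ⋖ j) (a b : ι) :
    a < b ↔ Noninversion (Equiv.swap i j) a b ∨ a = i ∧ b = j := by
  have := hij.lt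
  rw [Noninversion, swap_lt_swap_iff hij]
  grind

theorem noninversion_swap_apply_iff (i j a b : ι) :
    Noninversion (Equiv.swap i j) (Equiv.swap i j a) (Equiv.swap i j b) ↔
      Noninversion (Equiv.swap i j) a b := by
  simp [Noninversion, and_comm]

theorem inversion_iff_inversion_swap_mul_or {w : Equiv.Perm ι} {i j : ι} (hij : i ⋖ j)
    (hw : w⁻¹ j < w⁻¹ i) (a b : ι) :
    Inversion w a b ↔ Inversion (Equiv.swap i j * w) a b ∨ a = w⁻¹ j ∧ b = w⁻¹ i := by
  have := hij.lt
  simp only [Inversion, Equiv.Perm.mul_apply, swap_lt_swap_iff hij, Equiv.Perm.eq_inv_iff_eq]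
  have (h : w a = j ∧ w b = i) : a < b := by simpa [← h.1, ← h.2] using hw
  have (h : w b = j ∧ w a = i) : b < a := by simpa [← h.1, ← h.2] using hw
  grind

theorem not_inversion_swap_mul {w : Equiv.Perm ι} {i j : ι} (hij : i < j) :
    ¬ Inversion (Equiv.swap i j * w) (w⁻¹ j) (w⁻¹ i) := by
  simp [Inversion, hij.le]

variable [Finite ι]

theorem eq_one_of_strictMono {w : Equiv.Perm ι} (hw : StrictMono w) : w = 1 := by
  have : hw.orderIsoOfSurjective w w.surjective = OrderIso.refl ι := Subsingleton.elim _ _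
  exact Equiv.ext fun a => DFunLike.congr_fun this a

theorem eq_of_strictAnti {w w' : Equiv.Perm ι} (hw : StrictAnti w) (hw' : StrictAnti w') :
    w = w' := by
  have hinv : StrictAnti ⇑w'⁻¹ := fun a b hab => hw'.lt_iff_gt.1 (by simpa using hab)
  exact (inv_mul_eq_one.1 (eq_one_of_strictMono (hinv.comp hw))).symm

theorem exists_covBy_apply_lt_of_ne_one {w : Equiv.Perm ι} (hw : w ≠ 1) :
    ∃ i j, i ⋖ j ∧ w j < w i := by
  cases nonempty_fintype ι
  let := Fintype.toLocallyFiniteOrder (α := ι)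
  by_contra! h
  exact hw (eq_one_of_strictMono ((strictMono_iff_forall_covBy w).2 fun i j hij =>
    (h i j hij).lt_of_ne (w.injective.ne hij.ne)))

theorem perm_induction_of_covBy {P : Equiv.Perm ι → Prop} (one : P 1)
    (swap_mul : ∀ (w : Equiv.Perm ι) (i j : ι), i ⋖ j → w⁻¹ j < w⁻¹ i →
      P (Equiv.swap i j * w) → P w)
    (w : Equiv.Perm ι) : P w := by
  refine (InvImage.wf Inversion wellFounded_lt).induction w fun w ih => ?_
  by_cases hw : w = 1
  · rwa [hw]
  · obtain ⟨i, j, hij, hw'⟩ := exists_covBy_apply_lt_of_ne_one (inv_ne_one.2 hw)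
    have insert_iff := inversion_iff_inversion_swap_mul_or hij hw'
    have fewer_inversions : Inversion (Equiv.swap i j * w) < Inversion w :=
      lt_of_le_not_ge (fun a b h => (insert_iff a b).2 (.inl h)) fun hle =>
        not_inversion_swap_mul hij.lt (hle _ _ ((insert_iff _ _).2 (.inr ⟨rfl, rfl⟩)))
    exact swap_mul w i j hij hw' (ih _ fewer_inversions)

theorem exists_covBy_lt_apply_of_not_strictAnti {w : Equiv.Perm ι} (hw : ¬ StrictAnti w) :
    ∃ i j, i ⋖ j ∧ w i < w j := by
  cases nonempty_fintype ι
  let := Fintype.toLocallyFiniteOrder (α := ι)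
  by_contra! h
  exact hw ((strictAnti_iff_forall_covBy w).2 fun i j hij =>
    (h i j hij).lt_of_ne (w.injective.ne hij.ne'))

variable (ι) in
theorem exists_perm_strictAnti : ∃ w : Equiv.Perm ι, StrictAnti w := by
  cases nonempty_fintype ι
  let e := Fintype.orderIsoFinOfCardEq ι rfl
  exact ⟨e.toEquiv.permCongr Fin.revPerm, fun a b hab => by simpa using hab⟩

end Inversions

section SteinbergElement

theorem hecke_relation {A : Type*} [Semiring A] [CharP A 2] {S H s u : A}
    (hS : S * s = S) (braid : u * s * u = s * u * s) (hs : Commute s H) (hu : Commute u H) :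
    S * ((1 + u) * H) * (s * (1 + u)) = S * ((1 + u) * H) := by
  have hH : Commute H (s * (1 + u)) := hs.symm.mul_right ((Commute.one_right H).add_right hu.symm)
  have absorb : S * ((1 + u) * (s * (1 + u))) = S * (1 + u) :=
    calc S * ((1 + u) * (s * (1 + u)))
        = S * s + S * s * u + (S * u * s + S * (u * s * u)) := by noncomm_ring
      _ = S * s + S * s * u + (S * u * s + S * s * u * s) := by rw [braid]; noncomm_ring
      _ = S * (1 + u) := by rw [hS, CharTwo.add_self_eq_zero, add_zero, mul_add, mul_one]
  rw [mul_assoc, mul_assoc, hH.eq, ← mul_assoc (1 + u), ← mul_assoc, absorb, mul_assoc]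

variable (k ι : Type*) [Semiring k] [Fintype ι] [LinearOrder ι]

/-- The sum of all permutation matrices over `ℤ/2`, for rows and columns indexed by `ι` and with
coefficients in `k`. -/
noncomputable def permSum : MonoidAlgebra k (GL ι (ZMod 2)) :=
  subgroupSum k (permGL (ZMod 2)).range

/-- The sum of all upper unitriangular matrices over `ℤ/2`. These are all the invertible
upper-triangular matrices, since `1` is the only unit of `ℤ/2`. -/
noncomputable def unitriangularSum : MonoidAlgebra k (GL ι (ZMod 2)) :=
  subgroupSum k (patternSubgroup (ZMod 2) (· < ·))

/-- The Steinberg element of `GL ι (ℤ/2)`, for a finite linear order `ι` and with coefficients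
in `k`. -/
noncomputable def steinbergElement : MonoidAlgebra k (GL ι (ZMod 2)) :=
  permSum k ι * unitriangularSum k ι

variable {k ι}

theorem subgroupSum_patternSubgroup_of_insert {r s : ι → ι → Prop} [IsStrictOrder ι r]
    [IsStrictOrder ι s] {c d : ι} (hcd : c ≠ d) (hrs : ∀ a b, r a b ↔ s a b ∨ a = c ∧ b = d)
    (hs : ¬ s c d) :
    subgroupSum k (patternSubgroup (ZMod 2) r) =
      (1 + of k _ (transvectionGL hcd 1)) * subgroupSum k (patternSubgroup (ZMod 2) s) := by
  have hr : r c d := (hrs c d).2 (.inr ⟨rfl, rfl⟩)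
  refine subgroupSum_eq_one_add_of_mul (patternSubgroup_mono fun a b h => (hrs a b).2 (.inl h))
    (relIndex_patternSubgroup_of_insert hrs hs)
    ((transvectionGL_mem_patternSubgroup_iff hcd 1).2 (.inl hr)) ?_
  simp [transvectionGL_mem_patternSubgroup_iff, hs]

variable [CharP k 2]

theorem steinbergElement_mul_swap_mul {i j : ι} (hij : i ⋖ j) :
    steinbergElement k ι *
        (of k _ (permGL (ZMod 2) (Equiv.swap i j)) * (1 + of k _ (transvectionGL hij.ne 1))) =
      steinbergElement k ι := by
  have hlt := lt_iff_noninversion_swap_or hij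
  have hs := not_noninversion_swap hij.lt
  have hU : unitriangularSum k ι = _ := subgroupSum_patternSubgroup_of_insert hij.ne hlt hs
  have hu := le_normalizer_of_relIndex_eq_two
    (patternSubgroup_mono fun a b h => (hlt a b).2 (.inl h))
    (relIndex_patternSubgroup_of_insert hlt hs)
    ((transvectionGL_mem_patternSubgroup_iff hij.ne 1).2 (.inl hij.lt))
  rw [steinbergElement, hU]
  refine hecke_relation (subgroupSum_mul_of ⟨_, rfl⟩) ?_
    (commute_of_subgroupSum (permGL_mem_normalizer_patternSubgroup
      (noninversion_swap_apply_iff i j))) (commute_of_subgroupSum hu)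
  simp only [← map_mul, transvectionGL_mul_permGL_swap_mul_transvectionGL]

theorem steinbergElement_mul_perm_mul_inversionSum (w : Equiv.Perm ι) :
    steinbergElement k ι *
        (of k _ (permGL (ZMod 2) w) * subgroupSum k (patternSubgroup (ZMod 2) (Inversion w))) =
      steinbergElement k ι := by
  induction w using perm_induction_of_covBy with
  | one =>
    rw [patternSubgroup_eq_bot not_inversion_one, subgroupSum_bot, map_one, map_one, mul_one,
      mul_one]
  | swap_mul w i j hij hw ih =>
    have move_transvection :
        permGL (ZMod 2) (Equiv.swap i j * w) * transvectionGL hw.ne 1 =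
          transvectionGL hij.ne 1 * permGL (ZMod 2) (Equiv.swap i j * w) := by
      rw [permGL_mul_transvectionGL]
      simp
    have factor :
        of k _ (permGL (ZMod 2) w) * (1 + of k _ (transvectionGL hw.ne 1)) =
          of k _ (permGL (ZMod 2) (Equiv.swap i j)) * (1 + of k _ (transvectionGL hij.ne 1)) *
            of k _ (permGL (ZMod 2) (Equiv.swap i j * w)) := by
      rw [mul_assoc, mul_add, add_mul, mul_add, ← map_mul, ← map_mul, ← move_transvection]
      simp only [mul_one, one_mul, ← map_mul, ← mul_assoc, Equiv.swap_mul_self]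
    rw [subgroupSum_patternSubgroup_of_insert hw.ne (inversion_iff_inversion_swap_mul_or hij hw)
      (not_inversion_swap_mul hij.lt), ← mul_assoc (of k _ _), factor, mul_assoc _ (of k _ _),
      ← mul_assoc (steinbergElement k ι), steinbergElement_mul_swap_mul hij, ih]

theorem unitriangularSum_mul_perm_mul_unitriangularSum {w : Equiv.Perm ι} (hw : ¬ StrictAnti w) :
    unitriangularSum k ι * of k _ (permGL (ZMod 2) w) * unitriangularSum k ι = 0 := by
  obtain ⟨i, j, hij, hwij⟩ := exists_covBy_lt_apply_of_not_strictAnti hw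
  have hU : unitriangularSum k ι = _ := subgroupSum_patternSubgroup_of_insert hij.ne
    (lt_iff_noninversion_swap_or hij) (not_noninversion_swap hij.lt)
  have absorb : unitriangularSum k ι * of k _ (permGL (ZMod 2) w * transvectionGL hij.ne 1) =
      unitriangularSum k ι * of k _ (permGL (ZMod 2) w) := by
    rw [permGL_mul_transvectionGL, map_mul, ← mul_assoc, unitriangularSum,
      subgroupSum_mul_of ((transvectionGL_mem_patternSubgroup_iff _ 1).2 (.inl hwij))]
  have cancel : unitriangularSum k ι * of k _ (permGL (ZMod 2) w) *
      (1 + of k _ (transvectionGL hij.ne 1)) = 0 := by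
    rw [mul_add, mul_one, mul_assoc, ← map_mul, absorb, CharTwo.add_self_eq_zero]
  nth_rw 2 [hU]
  rw [← mul_assoc, cancel, zero_mul]

theorem unitriangularSum_mul_permSum_mul_unitriangularSum {w : Equiv.Perm ι} (hw : StrictAnti w) :
    unitriangularSum k ι * permSum k ι * unitriangularSum k ι =
      unitriangularSum k ι * of k _ (permGL (ZMod 2) w) * unitriangularSum k ι := by
  rw [permSum, subgroupSum, Finset.mul_sum, Finset.sum_mul]
  refine Finset.sum_eq_single_of_mem _ (by simp) fun x hx hxw => ?_
  obtain ⟨v, rfl⟩ : ∃ v, permGL (ZMod 2) v = x := by simpa using hx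
  refine unitriangularSum_mul_perm_mul_unitriangularSum fun hv => hxw ?_
  rw [eq_of_strictAnti hv hw]

end SteinbergElement

section Identification

theorem exists_coe_eq_permMatrix_iff_mem_range_permGL {ι R : Type*} [Fintype ι] [DecidableEq ι]
    [CommRing R] {g : GL ι R} :
    (∃ σ : Equiv.Perm ι, g.val = σ.permMatrix R) ↔ g ∈ (permGL R).range :=
  (Equiv.inv (Equiv.Perm ι)).exists_congr fun σ => by
    rw [eq_comm, Units.ext_iff, permGL, MonoidHom.coe_toHomUnits]
    simp

theorem blockTriangular_id_iff_mem_patternSubgroup {ι : Type*} [Fintype ι] [LinearOrder ι]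
    {g : GL ι (ZMod 2)} :
    Matrix.BlockTriangular g.val id ↔ g ∈ patternSubgroup (ZMod 2) (· < ·) := by
  refine ⟨fun hg a b hab => ?_, fun hg a b hba => ?_⟩
  · obtain hba | rfl := (not_lt.1 hab).lt_or_eq
    · rw [hg hba, Matrix.one_apply_ne hba.ne']
    · have hdet : ∏ c, g.val c c ≠ 0 := by
        rw [← Matrix.det_of_isUpperTriangular hg]
        exact (Matrix.isUnits_det_units g).ne_zero
      rw [Matrix.one_apply_eq]
      exact Fin.eq_one_of_ne_zero _ (Finset.prod_ne_zero_iff.1 hdet _ (Finset.mem_univ _))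
  · exact (hg a b hba.not_gt).trans (Matrix.one_apply_ne hba.ne')

theorem sigmaBar_eq_permSum (n : ℕ) : SigmaBar n = permSum (ZMod 2) (Fin n) := by
  rw [SigmaBar, permSum, subgroupSum, Finset.sum_filter]
  congr! 2
  exact exists_coe_eq_permMatrix_iff_mem_range_permGL

theorem bBar_eq_unitriangularSum (n : ℕ) : BBar n = unitriangularSum (ZMod 2) (Fin n) := by
  rw [BBar, unitriangularSum, subgroupSum, Finset.sum_filter]
  congr! 2
  exact blockTriangular_id_iff_mem_patternSubgroup

end Identification

end Steinberg

open Steinberg in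
theorem steinbergElement_idem_general (k ι : Type*) [Semiring k] [CharP k 2] [Fintype ι]
    [LinearOrder ι] : IsIdempotentElem (steinbergElement k ι) := by
  obtain ⟨w, hw⟩ := exists_perm_strictAnti ι
  have longest : subgroupSum k (patternSubgroup (ZMod 2) (Inversion w)) = unitriangularSum k ι := by
    rw [unitriangularSum, patternSubgroup_congr (inversion_iff_lt_of_strictAnti hw)]
  calc steinbergElement k ι * steinbergElement k ι
      = permSum k ι * (unitriangularSum k ι * permSum k ι * unitriangularSum k ι) := by
        simp only [steinbergElement, mul_assoc]
    _ = steinbergElement k ι * (of k _ (permGL (ZMod 2) w) * unitriangularSum k ι) := by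
        rw [unitriangularSum_mul_permSum_mul_unitriangularSum hw]
        simp only [steinbergElement, mul_assoc]
    _ = steinbergElement k ι := by
        rw [← longest, steinbergElement_mul_perm_mul_inversionSum]

/-- The mod 2 Steinberg element is idempotent. -/
theorem steinbergElement_idem (n : ℕ) (hn : 1 ≤ n) :
    SteinbergElement n * SteinbergElement n = SteinbergElement n := by
  rw [SteinbergElement, Steinberg.sigmaBar_eq_permSum, Steinberg.bBar_eq_unitriangularSum]
  exact steinbergElement_idem_general (ZMod 2) (Fin n)
end

section
/- For every n ≥ 1, the conjugate mod 2 Steinberg element e'_n = B̄_n · Σ̄_n in the group algebra (ℤ/2)[GL_n(ℤ/2)] is idempotent: e'_n * e'_n = e'_n. -/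
open MonoidAlgebra
open scoped Classical

/-- The conjugate mod 2 Steinberg element `e'_n = B̄_n ⬝ Σ̄_n`. -/
noncomputable def ConjSteinbergElement (n : ℕ) : MonoidAlgebra (ZMod 2) (GL (Fin n) (ZMod 2)) :=
  BBar n * SigmaBar n

/-!
In characteristic 2, if `a * x = a` for an involution `x` in a subgroup `H`, then `a * H̄ = 0`,
because the terms of `g` and `x * g` cancel.

If `σ` does not reverse the order, say `i < j` and `σ i ≤ σ j`, the transvection `1 + E i j` lies in
`B` and is conjugated into `B` by `σ`; hence `B̄ * σ * B̄ = 0`. So only the order-reversing `w`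
survives and `B̄ * Σ̄ * B̄ = B̄ * w * B̄`.

The element `a = B̄ * w` absorbs lower triangular matrices on the right. For `1 ≠ b ∈ B` consider
the first nonzero entry above the diagonal, reading column by column: if it sits in row `p` and
column `m`, let `s` swap the columns `p` and `m`, and let `ℓ` be the lower triangular matrix that
restores the triangular shape. Then `b ↦ ℓ * b * s` is an involution on the matrices with this
pivot, and `a * (ℓ * b * s) = a * b * s`; so the sum of `a * b` over these `b` is fixed by `s`
and killed by `Σ̄`. Only `b = 1` remains, which gives `a * B̄ * Σ̄ = a * Σ̄` and finally
`(B̄ * Σ̄) * (B̄ * Σ̄) = B̄ * w * B̄ * Σ̄ = B̄ * w * Σ̄ = B̄ * Σ̄`.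
-/

section GroupAlgebra

variable {G : Type*} [Group G] [Fintype G]

/-- The sum of the elements of a subgroup `H` in the group algebra `k[G]`. -/
noncomputable def subgroupSum (k : Type*) [Semiring k] (H : Subgroup G) : MonoidAlgebra k G :=
  ∑ g : G with g ∈ H, of k G g

variable {k : Type*} [Semiring k] {H : Subgroup G} {x : G}

lemma subgroupSum_mul_of (hx : x ∈ H) : subgroupSum k H * of k G x = subgroupSum k H := by
  simp only [subgroupSum, Finset.sum_mul, ← map_mul]
  exact Finset.sum_equiv (Equiv.mulRight x) (by simp [H.mul_mem_cancel_right hx]) (by simp)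

lemma of_mul_subgroupSum (hx : x ∈ H) : of k G x * subgroupSum k H = subgroupSum k H := by
  simp only [subgroupSum, Finset.mul_sum, ← map_mul]
  exact Finset.sum_equiv (Equiv.mulLeft x) (by simp [H.mul_mem_cancel_left hx]) (by simp)

lemma subgroupSum_range {K : Type*} [Group K] [Fintype K] {f : K →* G}
    (hf : Function.Injective f) : subgroupSum k f.range = ∑ y, of k G (f y) := by
  rw [subgroupSum, ← Finset.sum_image (f := of k G) hf.injOn]
  exact Finset.sum_congr (by ext; simp) fun _ _ => rfl

lemma mul_subgroupSum_eq_zero [CharP k 2] {a : MonoidAlgebra k G} (ha : a * of k G x = a)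
    (hxH : x ∈ H) (hx : orderOf x = 2) : a * subgroupSum k H = 0 := by
  have hsq : x * x = 1 := by rw [← pow_two, ← hx, pow_orderOf_eq_one]
  have hne : x ≠ 1 := fun h => by simp [h] at hx
  have : CharP (MonoidAlgebra k G) 2 :=
    charP_of_injective_ringHom (f := (singleOneRingHom : k →+* MonoidAlgebra k G))
      single_right_injective 2
  rw [subgroupSum, Finset.mul_sum]
  refine Finset.sum_involution (fun g _ => x * g) (fun g _ => ?_) (fun g _ _ => ?_)
    (fun g hg => ?_) (fun g _ => ?_)
  · rw [map_mul, ← mul_assoc, ha, CharTwo.add_self_eq_zero]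
  · simpa using hne
  · simpa [H.mul_mem_cancel_left hxH] using hg
  · rw [← mul_assoc, hsq, one_mul]

lemma subgroupSum_mul_of_mul_of {g : G} (hx : g * x * g⁻¹ ∈ H) :
    subgroupSum k H * of k G g * of k G x = subgroupSum k H * of k G g :=
  calc subgroupSum k H * of k G g * of k G x
      = subgroupSum k H * of k G (g * x * g⁻¹) * of k G g := by
        simp only [mul_assoc, ← map_mul, inv_mul_cancel, mul_one]
    _ = subgroupSum k H * of k G g := by rw [subgroupSum_mul_of hx]

end GroupAlgebra

section Matrices

variable {ι R : Type*} [Fintype ι] [DecidableEq ι] [CommRing R]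

/-- The parabolic subgroup of `GL ι R` of matrices that are block triangular for the block
labels `b`; the labels `id` and `OrderDual.toDual` give the upper and the lower triangular
matrices. -/
def blockTriangularSubgroup (R : Type*) [CommRing R] {α : Type*} [LinearOrder α] (b : ι → α) :
    Subgroup (GL ι R) where
  carrier := {g | g.val.BlockTriangular b}
  one_mem' := Matrix.blockTriangular_one
  mul_mem' := Matrix.BlockTriangular.mul
  inv_mem' {g} hg := by
    let _ := g.invertible
    simpa only [Set.mem_ofPred_eq, Matrix.coe_units_inv] using
      Matrix.blockTriangular_inv_of_blockTriangular hg

/-- The permutation matrices as a homomorphism into `GL ι R`; as in `Matrix.permMatrixHom`,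
the image of `σ` is the matrix sending the basis vector `e i` to `e (σ i)`. -/
def permGL (ι R : Type*) [Fintype ι] [DecidableEq ι] [CommRing R] : Equiv.Perm ι →* GL ι R :=
  (Matrix.permMatrixHom : Equiv.Perm ι →* Matrix ι ι R).toHomUnits

lemma coe_permGL (σ : Equiv.Perm ι) : (permGL ι R σ).val = σ⁻¹.permMatrix R := rfl

lemma mul_permGL_apply (A : Matrix ι ι R) (σ : Equiv.Perm ι) (r c : ι) :
    (A * (permGL ι R σ).val) r c = A r (σ c) := by
  simp [coe_permGL, Equiv.Perm.permMatrix, PEquiv.mul_toMatrix_toPEquiv, Equiv.Perm.inv_def]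

lemma permGL_injective [Nontrivial R] : Function.Injective (permGL ι R) := by
  intro σ τ h
  ext c
  have hentry := mul_permGL_apply (1 : Matrix ι ι R) σ (σ c) c
  rw [h, mul_permGL_apply, Matrix.one_apply_eq] at hentry
  by_contra hne
  exact zero_ne_one ((Matrix.one_apply_ne hne).symm.trans hentry)

lemma permGL_mul_apply (A : Matrix ι ι R) (σ : Equiv.Perm ι) (r c : ι) :
    ((permGL ι R σ).val * A) r c = A (σ⁻¹ r) c := by
  simp [coe_permGL, Equiv.Perm.permMatrix, PEquiv.toMatrix_toPEquiv_mul]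

lemma permGL_conj_mem_blockTriangularSubgroup {α : Type*} [LinearOrder α] {b : ι → α}
    {σ : Equiv.Perm ι} {g : GL ι R} (hg : g ∈ blockTriangularSubgroup R (b ∘ σ)) :
    permGL ι R σ * g * (permGL ι R σ)⁻¹ ∈ blockTriangularSubgroup R b := by
  intro r c hcr
  rw [← map_inv, Units.val_mul, mul_permGL_apply, Units.val_mul, permGL_mul_apply]
  exact hg (by simpa using hcr)

/-- The transvection `1 + v eₚᵀ`, which adds `v r` times row `p` to each row `r`. -/
def columnTransvection (v : ι → R) (p : ι) (hv : v p = 0) : GL ι R :=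
  have hsq : Matrix.vecMulVec v (Pi.single p 1) * Matrix.vecMulVec v (Pi.single p 1) = 0 := by
    simp [Matrix.vecMulVec_mul_vecMulVec, hv]
  { val := 1 + Matrix.vecMulVec v (Pi.single p 1)
    inv := 1 - Matrix.vecMulVec v (Pi.single p 1)
    val_inv := by simp [add_mul, mul_sub, hsq]
    inv_val := by simp [sub_mul, mul_add, hsq] }

section columnTransvection

variable {v : ι → R} {p : ι} (hv : v p = 0)

lemma coe_columnTransvection :
    (columnTransvection v p hv).val = 1 + Matrix.vecMulVec v (Pi.single p 1) := rfl

lemma columnTransvection_mul_apply (A : Matrix ι ι R) (r c : ι) :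
    ((columnTransvection v p hv).val * A) r c = A r c + v r * A p c := by
  simp [coe_columnTransvection, add_mul, Matrix.vecMulVec_mul, Matrix.vecMulVec_apply]

lemma columnTransvection_mem_blockTriangularSubgroup {α : Type*} [LinearOrder α] {b : ι → α}
    (hb : ∀ r, v r ≠ 0 → b r ≤ b p) :
    columnTransvection v p hv ∈ blockTriangularSubgroup R b := by
  refine Matrix.blockTriangular_one.add fun r c hcr => ?_
  rw [Matrix.vecMulVec_apply]
  obtain rfl | hc := eq_or_ne c p
  · rw [not_imp_comm.1 (hb r) hcr.not_ge, zero_mul]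
  · rw [Pi.single_eq_of_ne hc, mul_zero]

lemma orderOf_columnTransvection [CharP R 2] (hv0 : v ≠ 0) :
    orderOf (columnTransvection v p hv) = 2 := by
  refine orderOf_eq_prime ?_ fun h => hv0 ?_
  · ext r c
    rw [pow_two, Units.val_mul, columnTransvection_mul_apply, coe_columnTransvection]
    simp [Matrix.vecMulVec_apply, hv, add_assoc, Matrix.one_apply, Pi.single_apply,
      eq_comm, CharTwo.add_self_eq_zero]
  · funext r
    have hentry : (columnTransvection v p hv).val r p = (1 : GL ι R).val r p := by rw [h]
    simpa [coe_columnTransvection, Matrix.vecMulVec_apply] using hentry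

end columnTransvection

end Matrices

section Pivot

variable {ι R : Type*} [LinearOrder ι] [Fintype ι]

/-- The upper triangular matrices in `GL ι R`. -/
abbrev upperTriangularSubgroup (ι R : Type*) [LinearOrder ι] [Fintype ι] [CommRing R] :
    Subgroup (GL ι R) :=
  blockTriangularSubgroup R (id : ι → ι)

/-- The lower triangular matrices in `GL ι R`. -/
abbrev lowerTriangularSubgroup (ι R : Type*) [LinearOrder ι] [Fintype ι] [CommRing R] :
    Subgroup (GL ι R) :=
  blockTriangularSubgroup R (OrderDual.toDual : ι → ιᵒᵈ)

/-- The pivot of `A`: the position of the first nonzero entry above the diagonal in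
column-by-column reading order, or `⊤` if there is none. Positions are written
`(column, row)`, so that the reading order is lexicographic. -/
noncomputable def columnPivot [Zero R] (A : Matrix ι ι R) : WithTop (ι ×ₗ ι) :=
  Finset.min {q | (ofLex q).2 < (ofLex q).1 ∧ A (ofLex q).2 (ofLex q).1 ≠ 0}

lemma columnPivot_eq_top_iff [Zero R] {A : Matrix ι ι R} :
    columnPivot A = ⊤ ↔ ∀ r c, r < c → A r c = 0 := by
  simp only [columnPivot, Finset.min_eq_top, Finset.filter_eq_empty_iff, Finset.mem_univ,
    true_imp_iff, not_and, not_not]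
  exact ⟨fun h r c => h (x := toLex (c, r)), fun h q => h _ _⟩

lemma columnPivot_eq_coe_iff [Zero R] {A : Matrix ι ι R} {p m : ι} :
    columnPivot A = (toLex (m, p) : ι ×ₗ ι) ↔
      (p < m ∧ A p m ≠ 0) ∧ ∀ r c, r < c → A r c ≠ 0 → toLex (m, p) ≤ toLex (c, r) := by
  constructor
  · intro h
    exact ⟨by simpa using Finset.mem_of_min h,
      fun r c hrc hA => Finset.min_le_of_eq (by simpa using ⟨hrc, hA⟩) h⟩
  · rintro ⟨hmem, hle⟩
    refine le_antisymm (Finset.min_le (by simpa using hmem)) (Finset.le_min fun q hq => ?_)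
    obtain ⟨hlt, hne⟩ := (Finset.mem_filter.1 hq).2
    exact WithTop.coe_le_coe.2 (hle _ _ hlt hne)

section columnPivot

variable [Zero R] {A A' : Matrix ι ι R} {p m : ι}
  (hA : columnPivot A = (toLex (m, p) : ι ×ₗ ι))

include hA

lemma apply_eq_zero_of_lt_pivot_column {r c : ι} (hc : c < m) (hrc : r < c) : A r c = 0 := by
  by_contra hne
  exact ((columnPivot_eq_coe_iff.1 hA).2 r c hrc hne).not_gt (Prod.Lex.toLex_lt_toLex.2 (.inl hc))

lemma apply_eq_zero_of_lt_pivot_row {r : ι} (hr : r < p) : A r m = 0 := by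
  obtain ⟨⟨hpm, -⟩, hle⟩ := columnPivot_eq_coe_iff.1 hA
  by_contra hne
  exact (hle r m (hr.trans hpm) hne).not_gt (Prod.Lex.toLex_lt_toLex.2 (.inr ⟨rfl, hr⟩))

lemma columnPivot_congr (hA' : ∀ r c, c ≤ m → A' r c = A r c) :
    columnPivot A' = (toLex (m, p) : ι ×ₗ ι) := by
  obtain ⟨hmem, hle⟩ := columnPivot_eq_coe_iff.1 hA
  refine columnPivot_eq_coe_iff.2 ⟨by rwa [hA' p m le_rfl], fun r c hrc hne => ?_⟩
  obtain hc | hc := le_or_gt c m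
  · exact hle r c hrc (hA' r c hc ▸ hne)
  · exact Prod.Lex.toLex_le_toLex.2 (.inl hc)

end columnPivot

lemma isUnit_diag_of_mem_upper [CommRing R] {b : GL ι R}
    (hb : b ∈ upperTriangularSubgroup ι R) (r : ι) : IsUnit (b.val r r) := by
  have hdet := (Matrix.isUnit_iff_isUnit_det b.val).1 b.isUnit
  rw [Matrix.det_of_isUpperTriangular hb] at hdet
  exact IsUnit.prod_univ_iff.1 hdet r

lemma diag_eq_one_of_mem_upper {b : GL ι (ZMod 2)} (hb : b ∈ upperTriangularSubgroup ι (ZMod 2))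
    (r : ι) : b.val r r = 1 :=
  (isUnit_diag_of_mem_upper hb r).eq_one

lemma eq_one_of_columnPivot_eq_top {b : GL ι (ZMod 2)}
    (hb : b ∈ upperTriangularSubgroup ι (ZMod 2)) (htop : columnPivot b.val = ⊤) : b = 1 := by
  ext r c
  obtain hrc | rfl | hrc := lt_trichotomy r c
  · rw [columnPivot_eq_top_iff.1 htop r c hrc, Units.val_one, Matrix.one_apply_ne hrc.ne]
  · rw [diag_eq_one_of_mem_upper hb, Units.val_one, Matrix.one_apply_eq]
  · rw [hb hrc, Units.val_one, Matrix.one_apply_ne hrc.ne']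

lemma columnPivot_one [Zero R] [One R] : columnPivot (1 : Matrix ι ι R) = ⊤ :=
  columnPivot_eq_top_iff.2 fun _ _ h => Matrix.one_apply_ne h.ne

/-- The product `ℓ b s`, where `s` swaps the columns `p` and `m` and the lower triangular
transvection `ℓ` clears the entries of `b s` below the diagonal in column `p`. On the upper
triangular matrices `b` with pivot in row `p` and column `m` this is an involution. -/
noncomputable def pivotSwap (p m : ι) (b : GL ι (ZMod 2)) : GL ι (ZMod 2) :=
  columnTransvection (fun r => if p < r then b.val r m else 0) p (by simp) * b *
    permGL ι (ZMod 2) (Equiv.swap p m)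

section pivotSwap

variable {p m : ι} {b : GL ι (ZMod 2)} (hb : b ∈ upperTriangularSubgroup ι (ZMod 2))
  (hpivot : columnPivot b.val = (toLex (m, p) : ι ×ₗ ι))

include hb hpivot

lemma pivotSwap_apply (r c : ι) :
    (pivotSwap p m b).val r c = b.val r c + if p < r ∧ m < c then b.val r m * b.val p c else 0 := by
  obtain ⟨⟨hpm, hne⟩, -⟩ := columnPivot_eq_coe_iff.1 hpivot
  have hone : b.val p m = 1 := hne.isUnit.eq_one
  rw [pivotSwap, Units.val_mul, mul_permGL_apply, Units.val_mul, columnTransvection_mul_apply]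
  have hcol : b.val r p + (if p < r then b.val r m else 0) = b.val r m := by
    obtain hr | rfl | hr := lt_trichotomy r p
    · rw [if_neg hr.not_gt, add_zero, apply_eq_zero_of_lt_pivot_row hpivot hr,
        apply_eq_zero_of_lt_pivot_column hpivot hpm hr]
    · rw [if_neg (lt_irrefl r), add_zero, hone, diag_eq_one_of_mem_upper hb]
    · rw [if_pos hr, hb hr, zero_add]
  obtain rfl | hcp := eq_or_ne c p
  · rw [Equiv.swap_apply_left, hone, mul_one, if_neg (c := c < r ∧ m < c) fun h => h.2.not_gt hpm,
      add_zero]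
    exact CharTwo.add_eq_iff_eq_add.2 hcol.symm
  obtain rfl | hcm := eq_or_ne c m
  · rw [Equiv.swap_apply_right, diag_eq_one_of_mem_upper hb, mul_one, hcol,
      if_neg (c := p < r ∧ c < c) fun h => lt_irrefl c h.2, add_zero]
  · have hrow (hc : c < m) : b.val p c = 0 := by
      obtain h | h := hcp.lt_or_gt
      · exact hb h
      · exact apply_eq_zero_of_lt_pivot_column hpivot hc h
    rw [Equiv.swap_apply_of_ne_of_ne hcp hcm, ite_and, ite_mul, zero_mul]
    obtain hc | hc := hcm.lt_or_gt
    · simp only [hrow hc, mul_zero, ite_self]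
    · simp only [hc, if_true]

lemma pivotSwap_apply_of_le {c : ι} (hc : c ≤ m) (r : ι) :
    (pivotSwap p m b).val r c = b.val r c := by
  rw [pivotSwap_apply hb hpivot, if_neg fun h => h.2.not_ge hc, add_zero]

lemma columnPivot_pivotSwap : columnPivot (pivotSwap p m b).val = (toLex (m, p) : ι ×ₗ ι) :=
  columnPivot_congr hpivot fun r _ hc => pivotSwap_apply_of_le hb hpivot hc r

lemma pivotSwap_mem_upperTriangularSubgroup :
    pivotSwap p m b ∈ upperTriangularSubgroup ι (ZMod 2) := by
  intro r c hcr
  rw [pivotSwap_apply hb hpivot, hb hcr, zero_add, ite_eq_right_iff]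
  rintro ⟨-, hc⟩
  rw [hb (hc.trans hcr), zero_mul]

lemma pivotSwap_pivotSwap : pivotSwap p m (pivotSwap p m b) = b := by
  ext r c
  rw [pivotSwap_apply (pivotSwap_mem_upperTriangularSubgroup hb hpivot)
    (columnPivot_pivotSwap hb hpivot), pivotSwap_apply_of_le hb hpivot le_rfl,
    pivotSwap_apply hb hpivot p, if_neg (c := p < p ∧ m < c) fun h => lt_irrefl p h.1, add_zero,
    pivotSwap_apply hb hpivot, add_assoc, CharTwo.add_self_eq_zero, add_zero]

end pivotSwap

end Pivot

section Idempotent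

variable {ι k : Type*} [LinearOrder ι] [Fintype ι] [Semiring k]

lemma subgroupSum_upper_mul_permGL_mul_of_lower {w : Equiv.Perm ι} (hw : StrictAnti w)
    {l : GL ι (ZMod 2)} (hl : l ∈ lowerTriangularSubgroup ι (ZMod 2)) :
    subgroupSum k (upperTriangularSubgroup ι (ZMod 2)) * of k _ (permGL ι (ZMod 2) w) * of k _ l =
      subgroupSum k (upperTriangularSubgroup ι (ZMod 2)) * of k _ (permGL ι (ZMod 2) w) :=
  subgroupSum_mul_of_mul_of
    (permGL_conj_mem_blockTriangularSubgroup fun _ _ h => hl (hw.lt_iff_gt.1 h))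

lemma mul_of_pivotSwap {a : MonoidAlgebra k (GL ι (ZMod 2))}
    (ha : ∀ l ∈ lowerTriangularSubgroup ι (ZMod 2), a * of k _ l = a) (p m : ι)
    (b : GL ι (ZMod 2)) :
    a * of k _ (pivotSwap p m b) = a * of k _ b * of k _ (permGL ι (ZMod 2) (Equiv.swap p m)) := by
  have hlower : columnTransvection (fun r => if p < r then b.val r m else 0) p (by simp) ∈
      lowerTriangularSubgroup ι (ZMod 2) :=
    columnTransvection_mem_blockTriangularSubgroup _ fun _ hr =>
      (of_not_not fun h => hr (if_neg h)).le
  rw [pivotSwap, map_mul, map_mul, ← mul_assoc, ← mul_assoc, ha _ hlower]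

variable [CharP k 2]

lemma sum_columnPivot_eq_mul_subgroupSum_eq_zero {a : MonoidAlgebra k (GL ι (ZMod 2))}
    (ha : ∀ l ∈ lowerTriangularSubgroup ι (ZMod 2), a * of k _ l = a) (p m : ι) :
    (∑ b : GL ι (ZMod 2) with b ∈ upperTriangularSubgroup ι (ZMod 2) ∧
        columnPivot b.val = (toLex (m, p) : ι ×ₗ ι), a * of k _ b) *
      subgroupSum k (permGL ι (ZMod 2)).range = 0 := by
  obtain hpm | hpm := eq_or_ne p m
  · rw [Finset.filter_eq_empty_iff.2, Finset.sum_empty, zero_mul]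
    rintro b - ⟨-, hpivot⟩
    exact (columnPivot_eq_coe_iff.1 hpivot).1.1.ne hpm
  refine mul_subgroupSum_eq_zero (x := permGL ι (ZMod 2) (Equiv.swap p m)) ?_ ⟨_, rfl⟩ ?_
  · rw [Finset.sum_mul]
    refine Finset.sum_nbij' (pivotSwap p m) (pivotSwap p m) ?_ ?_ ?_ ?_ ?_ <;>
      simp only [Finset.mem_filter, Finset.mem_univ, true_and] <;> rintro b ⟨hb, hpivot⟩
    · exact ⟨pivotSwap_mem_upperTriangularSubgroup hb hpivot, columnPivot_pivotSwap hb hpivot⟩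
    · exact ⟨pivotSwap_mem_upperTriangularSubgroup hb hpivot, columnPivot_pivotSwap hb hpivot⟩
    · exact pivotSwap_pivotSwap hb hpivot
    · exact pivotSwap_pivotSwap hb hpivot
    · exact (mul_of_pivotSwap ha p m b).symm
  · rw [orderOf_injective _ permGL_injective, Equiv.Perm.IsSwap.orderOf ⟨p, m, hpm, rfl⟩]

lemma mul_subgroupSum_upper_mul_subgroupSum_perm {a : MonoidAlgebra k (GL ι (ZMod 2))}
    (ha : ∀ l ∈ lowerTriangularSubgroup ι (ZMod 2), a * of k _ l = a) :
    a * subgroupSum k (upperTriangularSubgroup ι (ZMod 2)) *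
      subgroupSum k (permGL ι (ZMod 2)).range = a * subgroupSum k (permGL ι (ZMod 2)).range := by
  rw [subgroupSum, Finset.mul_sum, ← Finset.sum_fiberwise _ (fun b => columnPivot b.val),
    Finset.sum_mul]
  simp only [Finset.filter_filter]
  rw [Fintype.sum_eq_single ⊤]
  · have htop : ({b | b ∈ upperTriangularSubgroup ι (ZMod 2) ∧ columnPivot b.val = ⊤} :
        Finset (GL ι (ZMod 2))) = {1} := by
      ext b
      simp only [Finset.mem_filter, Finset.mem_univ, true_and, Finset.mem_singleton]
      refine ⟨fun h => eq_one_of_columnPivot_eq_top h.1 h.2, ?_⟩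
      rintro rfl
      exact ⟨one_mem _, columnPivot_one⟩
    rw [htop, Finset.sum_singleton, map_one, mul_one]
  · intro q hq
    lift q to ι ×ₗ ι using hq
    exact sum_columnPivot_eq_mul_subgroupSum_eq_zero ha (ofLex q).2 (ofLex q).1

lemma subgroupSum_upper_mul_permGL_mul_subgroupSum_upper_eq_zero {σ : Equiv.Perm ι}
    (hσ : ¬ StrictAnti σ) :
    subgroupSum k (upperTriangularSubgroup ι (ZMod 2)) * of k _ (permGL ι (ZMod 2) σ) *
      subgroupSum k (upperTriangularSubgroup ι (ZMod 2)) = 0 := by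
  obtain ⟨i, j, hij, hσij⟩ : ∃ i j, i < j ∧ σ i ≤ σ j := by
    simpa [StrictAnti] using hσ
  have hv : (Pi.single i 1 : ι → ZMod 2) j = 0 := Pi.single_eq_of_ne hij.ne' 1
  have hsupp (r : ι) (hr : (Pi.single i 1 : ι → ZMod 2) r ≠ 0) : r = i := by
    by_contra hne
    exact hr (Pi.single_eq_of_ne hne 1)
  have hmem {b : ι → ι} (hb : b i ≤ b j) :
      columnTransvection _ j hv ∈ blockTriangularSubgroup (ZMod 2) b :=
    columnTransvection_mem_blockTriangularSubgroup hv fun r hr => hsupp r hr ▸ hb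
  exact mul_subgroupSum_eq_zero
    (subgroupSum_mul_of_mul_of (permGL_conj_mem_blockTriangularSubgroup (hmem hσij)))
    (hmem hij.le) (orderOf_columnTransvection hv (by simp))

lemma eq_revPerm_of_strictAnti {n : ℕ} {σ : Equiv.Perm (Fin n)} (hσ : StrictAnti σ) :
    σ = Fin.revPerm := by
  have hid : Fin.rev ∘ σ = id := (Fin.rev_strictAnti.comp hσ).eq_id
  ext i
  rw [Fin.revPerm_apply, ← Fin.rev_rev (σ i)]
  exact congrArg (fun j => (Fin.rev j : ℕ)) (congrFun hid i)

lemma subgroupSum_upper_mul_perm_mul_upper (n : ℕ) :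
    subgroupSum k (upperTriangularSubgroup (Fin n) (ZMod 2)) *
        subgroupSum k (permGL (Fin n) (ZMod 2)).range *
        subgroupSum k (upperTriangularSubgroup (Fin n) (ZMod 2)) =
      subgroupSum k (upperTriangularSubgroup (Fin n) (ZMod 2)) *
        of k _ (permGL (Fin n) (ZMod 2) Fin.revPerm) *
        subgroupSum k (upperTriangularSubgroup (Fin n) (ZMod 2)) := by
  rw [subgroupSum_range permGL_injective, Finset.mul_sum, Finset.sum_mul]
  exact Fintype.sum_eq_single _ fun σ hσ =>
    subgroupSum_upper_mul_permGL_mul_subgroupSum_upper_eq_zero fun hanti =>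
      hσ (eq_revPerm_of_strictAnti hanti)

theorem conjSteinbergElement_idem_general (k : Type*) [Semiring k] [CharP k 2] (n : ℕ) :
    IsIdempotentElem (subgroupSum k (upperTriangularSubgroup (Fin n) (ZMod 2)) *
      subgroupSum k (permGL (Fin n) (ZMod 2)).range) := by
  set B := subgroupSum k (upperTriangularSubgroup (Fin n) (ZMod 2))
  set S := subgroupSum k (permGL (Fin n) (ZMod 2)).range
  let w := of k _ (permGL (Fin n) (ZMod 2) Fin.revPerm)
  have hlower : ∀ l ∈ lowerTriangularSubgroup (Fin n) (ZMod 2), B * w * of k _ l = B * w :=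
    fun l hl => subgroupSum_upper_mul_permGL_mul_of_lower Fin.rev_strictAnti hl
  calc B * S * (B * S) = B * S * B * S := by rw [mul_assoc (B * S)]
    _ = B * w * B * S := by rw [subgroupSum_upper_mul_perm_mul_upper]
    _ = B * w * S := mul_subgroupSum_upper_mul_subgroupSum_perm hlower
    _ = B * S := by rw [mul_assoc, of_mul_subgroupSum (MonoidHom.mem_range.2 ⟨_, rfl⟩)]

end Idempotent

lemma BBar_eq_subgroupSum (n : ℕ) :
    BBar n = subgroupSum (ZMod 2) (upperTriangularSubgroup (Fin n) (ZMod 2)) := by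
  rw [BBar, ← Finset.sum_filter]
  refine Finset.sum_congr ?_ fun _ _ => rfl
  ext g
  simp only [Finset.mem_filter]
  rfl

lemma SigmaBar_eq_subgroupSum (n : ℕ) :
    SigmaBar n = subgroupSum (ZMod 2) (permGL (Fin n) (ZMod 2)).range := by
  rw [SigmaBar, ← Finset.sum_filter]
  refine Finset.sum_congr ?_ fun _ _ => rfl
  ext g
  simp only [Finset.mem_filter, Finset.mem_univ, true_and]
  rw [MonoidHom.mem_range, ← (Equiv.inv (Equiv.Perm (Fin n))).exists_congr_right]
  simp only [Units.ext_iff, coe_permGL, Equiv.inv_apply, eq_comm]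

/-- The conjugate mod 2 Steinberg element is idempotent. -/
theorem conjSteinbergElement_idem (n : ℕ) (hn : 1 ≤ n) :
    ConjSteinbergElement n * ConjSteinbergElement n = ConjSteinbergElement n := by
  rw [ConjSteinbergElement, BBar_eq_subgroupSum, SigmaBar_eq_subgroupSum]
  exact conjSteinbergElement_idem_general (ZMod 2) n
end

section
/- The polynomials w₂ = x₁² + x₁x₂ + x₂² and w₃ = x₁²x₂ + x₁x₂² in (ℤ/2)[x₁, x₂] are algebraically independent over ℤ/2: the ℤ/2-algebra homomorphism from the polynomial ring in two indeterminates (ℤ/2)[u, v] to (ℤ/2)[x₁, x₂] sending u ↦ w₂ and v ↦ w₃ is injective. -/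
open MvPolynomial

/-- The Dickson invariant `w₂ = x₁² + x₁x₂ + x₂²` in `(ℤ/2)[x₁, x₂]`. -/
noncomputable def w2 : MvPolynomial (Fin 2) (ZMod 2) :=
  X 0 ^ 2 + X 0 * X 1 + X 1 ^ 2

/-- The Dickson invariant `w₃ = x₁²x₂ + x₁x₂²` in `(ℤ/2)[x₁, x₂]`. -/
noncomputable def w3 : MvPolynomial (Fin 2) (ZMod 2) :=
  X 0 ^ 2 * X 1 + X 0 * X 1 ^ 2

/-!
The elements `x`, `y` and `-(x + y)` are the roots of the monic cubic `t³ - q t + c`, where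
`q = x² + xy + y²` and `c = x²y + xy²`; modulo 2 these roots are the nonzero vectors of the plane
on which `GL₂(ℤ/2)` acts. Hence `R[x, y]` is integral over `R[q, c]`, which therefore has
transcendence degree two, so its two generators cannot satisfy an algebraic relation.
-/

section DicksonCubic

variable {R A : Type*} [CommRing A]

theorem dickson_cubic_eq_prod (t x y : A) :
    t ^ 3 - (x ^ 2 + x * y + y ^ 2) * t + (x ^ 2 * y + x * y ^ 2) =
      (t - x) * (t - y) * (t + (x + y)) := by
  ring

variable [CommRing R] [Algebra R A]

theorem isIntegral_of_algebraMap_eq_dickson {q c : R} {x y : A}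
    (hq : algebraMap R A q = x ^ 2 + x * y + y ^ 2)
    (hc : algebraMap R A c = x ^ 2 * y + x * y ^ 2) : IsIntegral R x := by
  refine ⟨.X ^ 3 - .C q * .X + .C c, by monicity!, ?_⟩
  simp [hq, hc, dickson_cubic_eq_prod]

variable (R)

theorem isIntegral_adjoin_dickson_left (x y : A) :
    IsIntegral (Algebra.adjoin R {x ^ 2 + x * y + y ^ 2, x ^ 2 * y + x * y ^ 2}) x :=
  isIntegral_of_algebraMap_eq_dickson
    (q := ⟨x ^ 2 + x * y + y ^ 2, Algebra.subset_adjoin (by simp)⟩)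
    (c := ⟨x ^ 2 * y + x * y ^ 2, Algebra.subset_adjoin (by simp)⟩) rfl rfl

theorem isIntegral_adjoin_dickson_right (x y : A) :
    IsIntegral (Algebra.adjoin R {x ^ 2 + x * y + y ^ 2, x ^ 2 * y + x * y ^ 2}) y := by
  have hq : x ^ 2 + x * y + y ^ 2 = y ^ 2 + y * x + x ^ 2 := by ring
  have hc : x ^ 2 * y + x * y ^ 2 = y ^ 2 * x + y * x ^ 2 := by ring
  rw [hq, hc]
  exact isIntegral_adjoin_dickson_left R y x

end DicksonCubic

theorem isTranscendenceBasis_of_forall_isAlgebraic_adjoin {ι R A : Type*} [Finite ι] [CommRing R]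
    [CommRing A] [IsDomain A] [Algebra R A] {x f : ι → A} (hx : IsTranscendenceBasis R x)
    (hf : ∀ i, IsAlgebraic (Algebra.adjoin R (Set.range f)) (x i)) :
    IsTranscendenceBasis R f := by
  have : Nontrivial R := (algebraMap R A).domain_nontrivial
  have : FaithfulSMul R A :=
    (faithfulSMul_iff_algebraMap_injective R A).2 hx.1.algebraMap_injective
  have : Algebra.IsAlgebraic (Algebra.adjoin R (Set.range f)) A :=
    ⟨fun a ↦ (hx.isAlgebraic.isAlgebraic a).adjoin_of_forall_isAlgebraic
      fun _ hb ↦ Set.forall_mem_range.2 hf _ hb.1⟩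
  exact Algebra.IsAlgebraic.isTranscendenceBasis_of_lift_le_trdeg_of_finite R f
    hx.lift_cardinalMk_eq_trdeg.le

theorem dickson_algebraically_independent_general (R : Type*) [CommRing R] [IsDomain R] :
    AlgebraicIndependent R (![X 0 ^ 2 + X 0 * X 1 + X 1 ^ 2, X 0 ^ 2 * X 1 + X 0 * X 1 ^ 2] :
      Fin 2 → MvPolynomial (Fin 2) R) := by
  refine (isTranscendenceBasis_of_forall_isAlgebraic_adjoin (.mvPolynomial (Fin 2) R) ?_).1
  rw [Matrix.range_cons_cons_empty, Fin.forall_fin_two]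
  exact ⟨(isIntegral_adjoin_dickson_left R _ _).isAlgebraic,
    (isIntegral_adjoin_dickson_right R _ _).isAlgebraic⟩

/-- The Dickson invariants `w₂` and `w₃` are algebraically independent over `ℤ/2`:
the algebra map from the polynomial ring in two indeterminates sending `u ↦ w₂`,
`v ↦ w₃` is injective. -/
theorem dickson_algebraically_independent :
    Function.Injective
      (aeval ![w2, w3] :
        MvPolynomial (Fin 2) (ZMod 2) →ₐ[ZMod 2] MvPolynomial (Fin 2) (ZMod 2)) :=
  dickson_algebraically_independent_general (ZMod 2)
end
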